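/- As t → 0⁺, the rescaled heat kernels of SU(2) converge to Gaveau's heat kernel of the Heisenberg group: for every compact set K ⊂ [0, ∞) × ℝ, the functions (r, z) ↦ t² · p_t(√t · r, t · z) converge uniformly on K, as t → 0⁺, to (r, z) ↦ 2π² · h_1(r, z). -/

import Mathlib

open Real

/-- The Jacobi polynomial `P_k^{0,m}` defined by the Rodrigues-type formula. -/
noncomputable def jacobiP (k m : ℕ) (x : ℝ) : ℝ :=
  ((-1 : ℝ) ^ k / (2 ^ k * (Nat.factorial k : ℝ) * (1 + x) ^ m)) *
    iteratedDeriv k (fun y : ℝ => (1 + y) ^ m * (1 - y ^ 2) ^ k) x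

/-- The general term of the double series defining the subelliptic heat kernel on `SU(2)`. -/
noncomputable def heatTerm (t r z : ℝ) (n : ℤ) (k : ℕ) : ℂ :=
  (((2 * (k : ℝ) + (n.natAbs : ℝ) + 1) *
      Real.exp (-(4 * (k : ℝ) * ((k : ℝ) + (n.natAbs : ℝ) + 1) + 2 * (n.natAbs : ℝ)) * t) *
      (Real.cos r) ^ n.natAbs * jacobiP k n.natAbs (Real.cos (2 * r)) : ℝ) : ℂ) *
    Complex.exp ((n : ℂ) * (z : ℂ) * Complex.I)

/-- The subelliptic heat kernel `p_t(r,z)` on `SU(2)` in cylindric coordinates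
(the double series is real-valued). -/
noncomputable def heatP (t r z : ℝ) : ℝ := (∑' n : ℤ, ∑' k : ℕ, heatTerm t r z n k).re

/-- Gaveau's heat kernel of the three-dimensional Heisenberg group in cylindric
coordinates (with respect to the Lebesgue measure `r dr dθ dz`). -/
noncomputable def heisKer (t r z : ℝ) : ℝ :=
  (1 / (16 * Real.pi ^ 2)) *
    (∫ l : ℝ, Complex.exp (Complex.I * (l : ℂ) * (z : ℂ) / 2) *
        ((l : ℂ) / Complex.sinh ((l : ℂ) * (t : ℂ))) *
        Complex.exp (-(((r : ℂ) ^ 2 / 4) * (l : ℂ) *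
          (Complex.cosh ((l : ℂ) * (t : ℂ)) / Complex.sinh ((l : ℂ) * (t : ℂ)))))).re


open MeasureTheory Filter Topology

namespace SU2Heat

lemma jacobi_eq (k m : ℕ) (x : ℝ) (hx : 1 + x ≠ 0) :
    jacobiP k m x = ∑ j ∈ Finset.range (k + 1),
      (k.choose j : ℝ) * ((m + k).choose j : ℝ) * ((x - 1) / 2) ^ j * ((1 + x) / 2) ^ (k - j) := by
  unfold jacobiP
  have h1 : (fun y : ℝ => (1 + y) ^ m * (1 - y ^ 2) ^ k)
      = fun y => (1 + y) ^ (m + k) * (1 - y) ^ k := by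
    funext y
    rw [pow_add, mul_assoc, ← mul_pow]
    ring
  rw [h1, iteratedDeriv_fun_mul (by fun_prop) (by fun_prop), Finset.mul_sum]
  refine Finset.sum_congr rfl fun j hj => ?_
  have hj' : j ≤ k := by simpa [Nat.lt_succ_iff] using hj
  rw [iteratedDeriv_comp_const_add j (fun y : ℝ => y ^ (m + k)) 1,
    iteratedDeriv_comp_const_sub (k - j) (fun y : ℝ => y ^ k) 1]
  simp only [iteratedDeriv_pow, smul_eq_mul]
  have e1 : ((m + k).descFactorial j : ℝ) = (j.factorial : ℝ) * ((m + k).choose j : ℝ) := by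
    exact_mod_cast Nat.descFactorial_eq_factorial_mul_choose _ _
  have e2 : (k.descFactorial (k - j) : ℝ) * (j.factorial : ℝ) = (k.factorial : ℝ) := by
    have := Nat.factorial_mul_descFactorial (Nat.sub_le k j)
    rw [Nat.sub_sub_self hj'] at this
    rw [mul_comm]; exact_mod_cast this
  have e3 : k - (k - j) = j := Nat.sub_sub_self hj'
  have e4 : m + k - j = m + (k - j) := by omega
  rw [e1, e3, e4, pow_add]
  have e5 : ((-1 : ℝ)) ^ k * (-1) ^ (k - j) = (-1) ^ j := by
    rw [← pow_add]
    obtain ⟨d, rfl⟩ := Nat.exists_eq_add_of_le hj'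
    rw [show j + d + (j + d - j) = j + 2 * d by omega, pow_add, pow_mul]; simp
  have e6 : (2 : ℝ) ^ k = 2 ^ j * 2 ^ (k - j) := by rw [← pow_add, Nat.add_sub_cancel' hj']
  have e7 : (x - 1) ^ j = (-1) ^ j * (1 - x) ^ j := by rw [← mul_pow]; ring
  have hf : (k.factorial : ℝ) ≠ 0 := by positivity
  have hjf : (j.factorial : ℝ) ≠ 0 := by positivity
  rw [div_pow, div_pow, e7, ← e5, e6, ← e2]
  have hd : (k.descFactorial (k - j) : ℝ) ≠ 0 := by
    intro h; rw [h] at e2; simp at e2; exact hf e2.symm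
  field_simp

/-- `cos^n · P_k^{0,n}` in closed form. -/
noncomputable def Jp (k n : ℕ) (x : ℝ) : ℝ :=
  Real.cos x ^ n * ∑ j ∈ Finset.range (k + 1),
    (k.choose j : ℝ) * ((n + k).choose j : ℝ) * (-(Real.sin x) ^ 2) ^ j
      * ((Real.cos x) ^ 2) ^ (k - j)

lemma Jp_eq (k n : ℕ) (x : ℝ) (hx : Real.cos x ≠ 0) :
    Real.cos x ^ n * jacobiP k n (Real.cos (2 * x)) = Jp k n x := by
  have h2 : 1 + Real.cos (2 * x) = 2 * Real.cos x ^ 2 := by rw [Real.cos_two_mul]; ring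
  rw [jacobi_eq _ _ _ (by rw [h2]; positivity), Jp, h2]
  congr 1
  refine Finset.sum_congr rfl fun j _ => ?_
  congr 2
  · congr 1
    rw [Real.cos_two_mul, Real.cos_sq']; ring
  · ring

lemma Jp_bound (k n : ℕ) (t r R : ℝ) (ht : 0 < t) (hr : |r| ≤ R) :
    |Jp k n (√t * r)| ≤ Real.exp (R ^ 2 / 2) * Real.exp (2 * k * (n + k) * t) := by
  have hs : Real.sin (√t * r) ^ 2 ≤ t * R ^ 2 := by
    have h1 : |Real.sin (√t * r)| ≤ |√t * r| := Real.abs_sin_le_abs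
    have h2 := sq_le_sq.2 h1
    rw [mul_pow, Real.sq_sqrt ht.le] at h2
    have h3 : r ^ 2 ≤ R ^ 2 := sq_le_sq' (by linarith [abs_le.1 hr |>.1]) (abs_le.1 hr).2
    nlinarith
  have hc : Real.cos (√t * r) ^ 2 ≤ 1 := Real.cos_sq_le_one _
  unfold Jp
  rw [abs_mul, abs_pow]
  have hcn : |Real.cos (√t * r)| ^ n ≤ 1 := pow_le_one₀ (abs_nonneg _) (Real.abs_cos_le_one _)
  refine (mul_le_of_le_one_left (abs_nonneg _) hcn).trans ?_
  refine (Finset.abs_sum_le_sum_abs _ _).trans ?_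
  set y : ℝ := 2 * k * (n + k) * t with hy
  have hy0 : 0 ≤ y := by positivity
  have key : ∀ j ∈ Finset.range (k + 1), |(k.choose j : ℝ) * ((n + k).choose j : ℝ) *
      (-(Real.sin (√t * r)) ^ 2) ^ j * ((Real.cos (√t * r)) ^ 2) ^ (k - j)|
      ≤ ((R ^ 2 / 2) ^ j / (j.factorial : ℝ)) * Real.exp y := by
    intro j _
    rw [abs_mul, abs_mul, abs_mul, abs_pow, abs_pow, abs_neg, Nat.abs_cast, Nat.abs_cast,
      abs_of_nonneg (sq_nonneg _), abs_of_nonneg (sq_nonneg _)]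
    have a1 : (k.choose j : ℝ) ≤ (k : ℝ) ^ j / (j.factorial : ℝ) := Nat.choose_le_pow_div _ _
    have a2 : ((n + k).choose j : ℝ) ≤ ((n + k : ℕ) : ℝ) ^ j / (j.factorial : ℝ) :=
      Nat.choose_le_pow_div _ _
    have a3 : (Real.sin (√t * r) ^ 2) ^ j ≤ (t * R ^ 2) ^ j := by gcongr
    have a4 : (Real.cos (√t * r) ^ 2) ^ (k - j) ≤ 1 := pow_le_one₀ (sq_nonneg _) hc
    have a5 := Real.pow_div_factorial_le_exp y hy0 j
    calc _ ≤ ((k : ℝ) ^ j / (j.factorial : ℝ)) * (((n + k : ℕ) : ℝ) ^ j / (j.factorial : ℝ))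
            * (t * R ^ 2) ^ j * 1 := by gcongr
      _ = ((R ^ 2 / 2) ^ j / (j.factorial : ℝ)) * (y ^ j / (j.factorial : ℝ)) := by
          rw [hy]; push_cast
          simp only [div_pow, mul_pow]
          field_simp
      _ ≤ _ := by gcongr
  refine (Finset.sum_le_sum key).trans ?_
  rw [← Finset.sum_mul]
  gcongr
  exact Real.sum_le_exp_of_nonneg (by positivity) _

lemma heatTerm_norm (t r z : ℝ) (n : ℤ) (k : ℕ) (hr : Real.cos r ≠ 0) :
    ‖heatTerm t r z n k‖ = (2 * (k : ℝ) + (n.natAbs : ℝ) + 1) *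
      Real.exp (-(4 * (k : ℝ) * ((k : ℝ) + (n.natAbs : ℝ) + 1) + 2 * (n.natAbs : ℝ)) * t) *
      |Jp k n.natAbs r| := by
  unfold heatTerm
  rw [norm_mul, show (n : ℂ) * (z : ℂ) * Complex.I = ((n * z : ℝ) : ℂ) * Complex.I by push_cast; ring,
    Complex.norm_exp_ofReal_mul_I, mul_one, Complex.norm_real, mul_assoc _ (Real.cos r ^ _), Jp_eq _ _ _ hr,
    Real.norm_eq_abs, abs_mul]
  congr 1
  exact abs_of_nonneg (by positivity)

lemma heatTerm_bound (t r z R : ℝ) (n : ℤ) (k : ℕ) (ht : 0 < t) (hr : |r| ≤ R)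
    (hc : Real.cos (√t * r) ≠ 0) :
    ‖heatTerm t (√t * r) z n k‖ ≤ Real.exp (R ^ 2 / 2) * ((2 * (k : ℝ) + (n.natAbs : ℝ) + 1) *
      Real.exp (-(2 * k ^ 2 + 2 * (k + 1) * (n.natAbs : ℝ) + 4 * k) * t)) := by
  rw [heatTerm_norm _ _ _ _ _ hc]
  calc _ ≤ (2 * (k : ℝ) + (n.natAbs : ℝ) + 1) *
      Real.exp (-(4 * (k : ℝ) * ((k : ℝ) + (n.natAbs : ℝ) + 1) + 2 * (n.natAbs : ℝ)) * t) *
      (Real.exp (R ^ 2 / 2) * Real.exp (2 * k * (n.natAbs + k) * t)) := by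
        gcongr; exact Jp_bound _ _ _ _ _ ht hr
    _ = Real.exp (R ^ 2 / 2) * ((2 * (k : ℝ) + (n.natAbs : ℝ) + 1) *
      (Real.exp (-(4 * (k : ℝ) * ((k : ℝ) + (n.natAbs : ℝ) + 1) + 2 * (n.natAbs : ℝ)) * t) *
        Real.exp (2 * k * (n.natAbs + k) * t))) := by ring
    _ = _ := by
      rw [← Real.exp_add]; congr 3; ring

lemma floor_close (t μ : ℝ) (ht : 0 < t) : |t * ((⌊μ / t⌋.natAbs : ℕ) : ℝ) - (|μ|)| ≤ t := by
  have h0 : ((⌊μ / t⌋.natAbs : ℕ) : ℝ) = |(⌊μ / t⌋ : ℝ)| := by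
    rw [Nat.cast_natAbs]; push_cast; rfl
  have h1 : t * ((⌊μ / t⌋.natAbs : ℕ) : ℝ) = |t * (⌊μ / t⌋ : ℝ)| := by
    rw [h0, abs_mul, abs_of_pos ht]
  rw [h1]
  refine (abs_abs_sub_abs_le _ _).trans ?_
  have h2 := Int.floor_le (μ / t)
  have h3 := Int.lt_floor_add_one (μ / t)
  rw [le_div_iff₀ ht] at h2
  rw [div_lt_iff₀ ht] at h3
  rw [abs_le]; constructor <;> nlinarith

/-- dominating function -/
noncomputable def Bd (k : ℕ) (μ : ℝ) : ℝ :=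
  ((k : ℝ) + 1) ^ (-(1 / 2 : ℝ)) * Real.exp (-((k + 1) * |μ|))

lemma t_bound (t : ℝ) (k : ℕ) (ht : 0 < t) (ht1 : t ≤ 1) :
    t * Real.exp (-(2 * k ^ 2 * t)) ≤ Real.exp 2 * ((k : ℝ) + 1) ^ (-(3 / 2 : ℝ)) := by
  have hk : (0 : ℝ) < k + 1 := by positivity
  set y : ℝ := t * (k + 1) ^ 2 with hy
  have hy0 : 0 < y := by positivity
  have h1 : Real.exp (-(2 * k ^ 2 * t)) ≤ Real.exp 2 * Real.exp (-y) := by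
    rw [← Real.exp_add, Real.exp_le_exp, hy]
    nlinarith [mul_nonneg ht.le (sq_nonneg ((k : ℝ) - 1))]
  have h2 : t ≤ t ^ (3 / 4 : ℝ) := by
    conv_lhs => rw [← Real.rpow_one t]
    exact Real.rpow_le_rpow_of_exponent_ge ht ht1 (by norm_num)
  have h3 : y ^ (3 / 4 : ℝ) = t ^ (3 / 4 : ℝ) * ((k : ℝ) + 1) ^ (3 / 2 : ℝ) := by
    rw [hy, Real.mul_rpow ht.le (by positivity), ← Real.rpow_natCast, ← Real.rpow_mul hk.le]
    norm_num
  have h4 : y ^ (3 / 4 : ℝ) ≤ Real.exp y := by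
    rcases le_total y 1 with h | h
    · exact (Real.rpow_le_one hy0.le h (by norm_num)).trans (Real.one_le_exp hy0.le)
    · calc y ^ (3 / 4 : ℝ) ≤ y ^ (1 : ℝ) := Real.rpow_le_rpow_of_exponent_le h (by norm_num)
        _ ≤ _ := by rw [Real.rpow_one]; linarith [Real.add_one_le_exp y]
  have h5 : t ^ (3 / 4 : ℝ) = y ^ (3 / 4 : ℝ) * ((k : ℝ) + 1) ^ (-(3 / 2 : ℝ)) := by
    rw [h3, mul_assoc, ← Real.rpow_add hk]; norm_num
  calc _ ≤ (Real.exp y * ((k : ℝ) + 1) ^ (-(3 / 2 : ℝ))) * (Real.exp 2 * Real.exp (-y)) := by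
        gcongr
        rw [h5] at h2
        exact h2.trans (by gcongr)
    _ = (Real.exp y * Real.exp (-y)) * (Real.exp 2 * ((k : ℝ) + 1) ^ (-(3 / 2 : ℝ))) := by ring
    _ = _ := by rw [← Real.exp_add]; simp

/-- the rescaled step function -/
noncomputable def G (k : ℕ) (q : ℝ × ℝ × ℝ) (μ : ℝ) : ℂ :=
  (q.1 : ℂ) * heatTerm q.1 (√q.1 * q.2.1) (q.1 * q.2.2) ⌊μ / q.1⌋ k

lemma G_bound (k : ℕ) (t r z R μ : ℝ) (ht : 0 < t) (ht1 : t ≤ 1) (hr : |r| ≤ R)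
    (hc : Real.cos (√t * r) ≠ 0) :
    ‖G k (t, r, z) μ‖ ≤ Real.exp (R ^ 2 / 2) * (3 * Real.exp 4) * Bd k μ := by
  have hk : (0 : ℝ) < k + 1 := by positivity
  unfold G
  simp only
  rw [norm_mul, Complex.norm_real, Real.norm_eq_abs, abs_of_pos ht]
  have hb := heatTerm_bound t r (t * z) R ⌊μ / t⌋ k ht hr hc
  have hf := floor_close t μ ht
  set n : ℝ := ((⌊μ / t⌋.natAbs : ℕ) : ℝ) with hn
  have hn0 : 0 ≤ n := by positivity
  have hf1 := (abs_le.1 hf).1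
  have hf2 := (abs_le.1 hf).2
  have e1 : Real.exp (-(2 * k ^ 2 + 2 * (k + 1) * n + 4 * k) * t) ≤
      Real.exp 2 * Real.exp (-(2 * k ^ 2 * t)) * Real.exp (-((k + 1) * |μ|))
        * Real.exp (-((k + 1) * |μ|)) := by
    rw [← Real.exp_add, ← Real.exp_add, ← Real.exp_add, Real.exp_le_exp]
    have : (k + 1) * (|μ| - t) ≤ (k + 1) * (t * n) := by gcongr; linarith
    have h0 : 0 ≤ k * t := by positivity
    nlinarith
  have e2 : |μ| * Real.exp (-((k + 1) * |μ|)) ≤ ((k : ℝ) + 1) ^ (-(1 / 2 : ℝ)) := by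
    have a1 : (k + 1) * |μ| ≤ Real.exp ((k + 1) * |μ|) := by
      linarith [Real.add_one_le_exp ((k + 1) * |μ|)]
    have a2 : |μ| * Real.exp (-((k + 1) * |μ|)) ≤ ((k : ℝ) + 1) ^ (-1 : ℝ) := by
      rw [Real.rpow_neg_one, Real.exp_neg, ← div_eq_mul_inv, div_le_iff₀ (Real.exp_pos _),
        inv_mul_eq_div, le_div_iff₀ hk]
      linarith
    refine a2.trans (Real.rpow_le_rpow_of_exponent_le (by simp) (by norm_num))
  have e3 : (k + 1) * (t * Real.exp (-(2 * k ^ 2 * t)))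
      ≤ Real.exp 2 * ((k : ℝ) + 1) ^ (-(1 / 2 : ℝ)) := by
    calc _ ≤ (k + 1) * (Real.exp 2 * ((k : ℝ) + 1) ^ (-(3 / 2 : ℝ))) := by
          exact mul_le_mul_of_nonneg_left (t_bound t k ht ht1) hk.le
      _ = Real.exp 2 * (((k : ℝ) + 1) ^ (1 : ℝ) * ((k : ℝ) + 1) ^ (-(3 / 2 : ℝ))) := by
          rw [Real.rpow_one]; ring
      _ = _ := by rw [← Real.rpow_add hk]; norm_num
  have e4 : t * (2 * (k : ℝ) + n + 1) ≤ 2 * ((k + 1) * t) + |μ| := by nlinarith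
  set E := Real.exp (-((k + 1) * |μ|)) with hE
  set P := ((k : ℝ) + 1) ^ (-(1 / 2 : ℝ)) with hP
  set X := Real.exp (-(2 * k ^ 2 * t)) with hX
  have hE1 : E ≤ 1 := Real.exp_le_one_iff.2 (by simp; positivity)
  have hX1 : X ≤ 1 := Real.exp_le_one_iff.2 (by simp; positivity)
  have hE0 : 0 < E := Real.exp_pos _
  have hX0 : 0 < X := Real.exp_pos _
  have hP0 : 0 < P := by positivity
  have e22 : Real.exp 4 = Real.exp 2 * Real.exp 2 := by rw [← Real.exp_add]; norm_num
  have h21 : 1 ≤ Real.exp 2 := Real.one_le_exp (by norm_num)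
  calc t * ‖heatTerm t (√t * r) (t * z) ⌊μ / t⌋ k‖
      ≤ t * (Real.exp (R ^ 2 / 2) * ((2 * (k : ℝ) + n + 1) *
        (Real.exp 2 * X * E * E))) := by
        gcongr; exact hb.trans (by gcongr)
    _ = Real.exp (R ^ 2 / 2) * Real.exp 2 * E * ((t * (2 * (k : ℝ) + n + 1)) * (X * E)) := by ring
    _ ≤ Real.exp (R ^ 2 / 2) * Real.exp 2 * E * ((2 * ((k + 1) * t) + |μ|) * (X * E)) := by gcongr
    _ = Real.exp (R ^ 2 / 2) * Real.exp 2 * E * (2 * ((k + 1) * (t * X)) * E + (|μ| * E) * X) := by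
        ring
    _ ≤ Real.exp (R ^ 2 / 2) * Real.exp 2 * E * (2 * (Real.exp 2 * P) * 1 + P * 1) := by gcongr
    _ ≤ Real.exp (R ^ 2 / 2) * Real.exp 2 * E * (2 * (Real.exp 2 * P) * 1 + (Real.exp 2 * P)) := by
        have : P * 1 ≤ Real.exp 2 * P := by nlinarith
        gcongr
    _ = _ := by rw [Bd, e22]; ring


lemma sin_eq_sinc (x : ℝ) : Real.sin x = x * Real.sinc x := by
  by_cases h : x = 0
  · simp [h]
  · rw [Real.sinc_of_ne_zero h]; field_simp

/-- the filter of rescaled parameters -/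
noncomputable def lf (p : ℝ × ℝ) : Filter (ℝ × ℝ × ℝ) := (𝓝[>] (0 : ℝ)) ×ˢ 𝓝 p

instance (p : ℝ × ℝ) : (lf p).IsCountablyGenerated := by unfold lf; infer_instance

section limits
variable (p : ℝ × ℝ)

lemma lf_pos : ∀ᶠ q in lf p, 0 < q.1 :=
  (tendsto_fst (f := 𝓝[>] (0 : ℝ)) (g := 𝓝 p)).eventually self_mem_nhdsWithin

lemma lf_t : Tendsto (fun q : ℝ × ℝ × ℝ => q.1) (lf p) (𝓝 0) :=
  (tendsto_fst (f := 𝓝[>] (0 : ℝ)) (g := 𝓝 p)).mono_right nhdsWithin_le_nhds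

lemma lf_r : Tendsto (fun q : ℝ × ℝ × ℝ => q.2.1) (lf p) (𝓝 p.1) :=
  (continuous_fst.tendsto p).comp (tendsto_snd (f := 𝓝[>] (0 : ℝ)) (g := 𝓝 p))

lemma lf_z : Tendsto (fun q : ℝ × ℝ × ℝ => q.2.2) (lf p) (𝓝 p.2) :=
  (continuous_snd.tendsto p).comp (tendsto_snd (f := 𝓝[>] (0 : ℝ)) (g := 𝓝 p))

lemma lf_x : Tendsto (fun q : ℝ × ℝ × ℝ => √q.1 * q.2.1) (lf p) (𝓝 0) := by
  have := ((Real.continuous_sqrt.tendsto 0).comp (lf_t p)).mul (lf_r p)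
  simpa using this

lemma lf_cos : Tendsto (fun q : ℝ × ℝ × ℝ => Real.cos (√q.1 * q.2.1)) (lf p) (𝓝 1) := by
  simpa [Function.comp_def] using (Real.continuous_cos.tendsto 0).comp (lf_x p)

lemma lf_cos_pos : ∀ᶠ q in lf p, 0 < Real.cos (√q.1 * q.2.1) :=
  (lf_cos p).eventually (lt_mem_nhds one_pos)

lemma lf_n (μ : ℝ) :
    Tendsto (fun q : ℝ × ℝ × ℝ => q.1 * ((⌊μ / q.1⌋.natAbs : ℕ) : ℝ)) (lf p) (𝓝 (|μ|)) := by
  rw [tendsto_iff_dist_tendsto_zero]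
  refine squeeze_zero' (Eventually.of_forall fun _ => dist_nonneg) ?_ (lf_t p)
  filter_upwards [lf_pos p] with q hq
  rw [Real.dist_eq]; exact floor_close _ _ hq

lemma lf_fl (μ : ℝ) :
    Tendsto (fun q : ℝ × ℝ × ℝ => q.1 * (⌊μ / q.1⌋ : ℝ)) (lf p) (𝓝 μ) := by
  rw [tendsto_iff_dist_tendsto_zero]
  refine squeeze_zero' (Eventually.of_forall fun _ => dist_nonneg) ?_ (lf_t p)
  filter_upwards [lf_pos p] with q hq
  rw [Real.dist_eq]
  have h2 := Int.floor_le (μ / q.1)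
  have h3 := Int.lt_floor_add_one (μ / q.1)
  rw [le_div_iff₀ hq] at h2
  rw [div_lt_iff₀ hq] at h3
  rw [abs_le]; constructor <;> nlinarith

lemma lf_sinc (a : ℝ) :
    Tendsto (fun q : ℝ × ℝ × ℝ => Real.sinc (√q.1 * q.2.1 * a)) (lf p) (𝓝 1) := by
  have h : Tendsto (fun q : ℝ × ℝ × ℝ => √q.1 * q.2.1 * a) (lf p) (𝓝 0) := by
    simpa using (lf_x p).mul_const a
  simpa [Function.comp_def] using (Real.continuous_sinc.tendsto 0).comp h

lemma lf_cospow (μ : ℝ) :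
    Tendsto (fun q : ℝ × ℝ × ℝ => Real.cos (√q.1 * q.2.1) ^ (⌊μ / q.1⌋.natAbs)) (lf p)
      (𝓝 (Real.exp (-(|μ| * (p.1 ^ 2 / 2))))) := by
  have h1 : Tendsto (fun q : ℝ × ℝ × ℝ => (Real.cos (√q.1 * q.2.1) - 1) / q.1) (lf p)
      (𝓝 (-(p.1 ^ 2 / 2))) := by
    have h := ((((lf_r p).pow 2).div_const 2).mul ((lf_sinc p (1 / 2)).pow 2)).neg
    rw [show -(p.1 ^ 2 / 2 * 1 ^ 2) = -(p.1 ^ 2 / 2) by ring] at h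
    refine h.congr' ?_
    filter_upwards [lf_pos p] with q hq
    have e : Real.cos (√q.1 * q.2.1) = 1 - 2 * Real.sin (√q.1 * q.2.1 * (1 / 2)) ^ 2 := by
      have := Real.cos_two_mul (√q.1 * q.2.1 * (1 / 2))
      rw [Real.cos_sq'] at this
      rw [show 2 * (√q.1 * q.2.1 * (1 / 2)) = √q.1 * q.2.1 by ring] at this
      rw [this]; ring
    rw [e, sin_eq_sinc, mul_pow, mul_pow, mul_pow, Real.sq_sqrt hq.le]
    field_simp
    ring
  have h2 : Tendsto (fun q : ℝ × ℝ × ℝ => Real.log (Real.cos (√q.1 * q.2.1)) / q.1) (lf p)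
      (𝓝 (-(p.1 ^ 2 / 2))) := by
    have h3 := h1.div (lf_cos p) one_ne_zero
    rw [div_one] at h3
    refine tendsto_of_tendsto_of_tendsto_of_le_of_le' h3 h1 ?_ ?_
    · filter_upwards [lf_pos p, lf_cos_pos p] with q hq hc
      have := Real.one_sub_inv_le_log_of_pos hc
      rw [Pi.div_apply, div_right_comm]
      gcongr
      rw [sub_div, div_self hc.ne', one_div]; exact this
    · filter_upwards [lf_pos p, lf_cos_pos p] with q hq hc
      have := Real.log_le_sub_one_of_pos hc
      gcongr
  have h4 := (Real.continuous_exp.tendsto _).comp ((lf_n p μ).mul h2)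
  rw [show |μ| * -(p.1 ^ 2 / 2) = -(|μ| * (p.1 ^ 2 / 2)) by ring] at h4
  refine h4.congr' ?_
  filter_upwards [lf_pos p, lf_cos_pos p] with q hq hc
  rw [Function.comp, ← Real.rpow_natCast, Real.rpow_def_of_pos hc]
  congr 1
  field_simp

lemma lf_choose (μ : ℝ) (k j : ℕ) (hj : j ≤ k) :
    Tendsto (fun q : ℝ × ℝ × ℝ => (((⌊μ / q.1⌋.natAbs + k).choose j : ℕ) : ℝ) * q.1 ^ j) (lf p)
      (𝓝 (|μ| ^ j / (j.factorial : ℝ))) := by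
  have h : Tendsto (fun q : ℝ × ℝ × ℝ => (∏ i ∈ Finset.range j,
      (q.1 * ((⌊μ / q.1⌋.natAbs : ℕ) : ℝ) + q.1 * ((k : ℝ) - i))) / (j.factorial : ℝ)) (lf p)
      (𝓝 ((∏ i ∈ Finset.range j, |μ|) / (j.factorial : ℝ))) := by
    refine Tendsto.div_const (tendsto_finsetProd _ fun i _ => ?_) _
    simpa using (lf_n p μ).add ((lf_t p).mul_const ((k : ℝ) - i))
  rw [Finset.prod_const, Finset.card_range] at h
  refine h.congr fun q => ?_
  have hd : ((⌊μ / q.1⌋.natAbs + k).descFactorial j : ℝ)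
      = ∏ i ∈ Finset.range j, (((⌊μ / q.1⌋.natAbs : ℕ) : ℝ) + ((k : ℝ) - i)) := by
    rw [Nat.descFactorial_eq_prod_range, Nat.cast_prod]
    refine Finset.prod_congr rfl fun i hi => ?_
    have : i < j := Finset.mem_range.1 hi
    rw [Nat.cast_sub (by omega)]; push_cast; ring
  rw [Nat.descFactorial_eq_factorial_mul_choose] at hd
  push_cast at hd
  have e : ∏ i ∈ Finset.range j, (q.1 * ((⌊μ / q.1⌋.natAbs : ℕ) : ℝ) + q.1 * ((k : ℝ) - i))
      = q.1 ^ j * ∏ i ∈ Finset.range j, (((⌊μ / q.1⌋.natAbs : ℕ) : ℝ) + ((k : ℝ) - i)) := by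
    simp only [← mul_add]
    rw [Finset.prod_mul_distrib]; simp
  rw [e, ← hd]
  field_simp

/-- Laguerre polynomial -/
noncomputable def Lag (k : ℕ) (x : ℝ) : ℝ :=
  ∑ j ∈ Finset.range (k + 1), (k.choose j : ℝ) * ((-x) ^ j / (j.factorial : ℝ))

lemma lf_Jp (μ : ℝ) (k : ℕ) :
    Tendsto (fun q : ℝ × ℝ × ℝ => Jp k (⌊μ / q.1⌋.natAbs) (√q.1 * q.2.1)) (lf p)
      (𝓝 (Real.exp (-(|μ| * (p.1 ^ 2 / 2))) * Lag k (|μ| * p.1 ^ 2))) := by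
  unfold Jp Lag
  refine (lf_cospow p μ).mul (tendsto_finsetSum _ fun j hj => ?_)
  have hj' : j ≤ k := by simpa [Nat.lt_succ_iff] using hj
  have h := (((lf_choose p μ k j hj').const_mul (k.choose j : ℝ)).mul
    ((((lf_r p).pow 2).mul ((lf_sinc p 1).pow 2)).neg.pow j)).mul (((lf_cos p).pow 2).pow (k - j))
  have e : (k.choose j : ℝ) * (|μ| ^ j / (j.factorial : ℝ)) * (-(p.1 ^ 2 * 1 ^ 2)) ^ j
      * (1 ^ 2) ^ (k - j) = (k.choose j : ℝ) * ((-(|μ| * p.1 ^ 2)) ^ j / (j.factorial : ℝ)) := by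
    rw [show -(|μ| * p.1 ^ 2) = |μ| * -(p.1 ^ 2) by ring, mul_pow]; simp; ring
  rw [e] at h
  refine h.congr' ?_
  filter_upwards [lf_pos p] with q hq
  rw [sin_eq_sinc, mul_pow, mul_pow, Real.sq_sqrt hq.le, mul_one,
    show -(q.1 * q.2.1 ^ 2 * Real.sinc (√q.1 * q.2.1) ^ 2)
      = q.1 * -(q.2.1 ^ 2 * Real.sinc (√q.1 * q.2.1) ^ 2) by ring, mul_pow q.1]
  ring

/-- the pointwise limit -/
noncomputable def Phi (k : ℕ) (μ : ℝ) : ℂ :=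
  ((|μ| * Real.exp (-((4 * k + 2) * |μ|)) *
    (Real.exp (-(|μ| * (p.1 ^ 2 / 2))) * Lag k (|μ| * p.1 ^ 2)) : ℝ) : ℂ)
    * Complex.exp (((μ * p.2 : ℝ) : ℂ) * Complex.I)

lemma lf_G (μ : ℝ) (k : ℕ) :
    Tendsto (fun q : ℝ × ℝ × ℝ => G k q μ) (lf p) (𝓝 (Phi p k μ)) := by
  have a1 : Tendsto (fun q : ℝ × ℝ × ℝ => q.1 * (2 * (k : ℝ) + ((⌊μ / q.1⌋.natAbs : ℕ) : ℝ) + 1))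
      (lf p) (𝓝 (|μ|)) := by
    have := ((lf_t p).mul_const (2 * (k : ℝ) + 1)).add (lf_n p μ)
    rw [zero_mul, zero_add] at this
    exact this.congr fun q => by ring
  have a2 : Tendsto (fun q : ℝ × ℝ × ℝ => Real.exp (-(4 * (k : ℝ) * ((k : ℝ) +
      ((⌊μ / q.1⌋.natAbs : ℕ) : ℝ) + 1) + 2 * ((⌊μ / q.1⌋.natAbs : ℕ) : ℝ)) * q.1))
      (lf p) (𝓝 (Real.exp (-((4 * k + 2) * |μ|)))) := by
    refine (Real.continuous_exp.tendsto _).comp ?_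
    have := (((lf_t p).const_mul (4 * (k : ℝ) * (k + 1))).add
      ((lf_n p μ).const_mul (4 * (k : ℝ) + 2))).neg
    rw [mul_zero, zero_add] at this
    exact this.congr fun q => by ring
  have a3 := ((a1.mul a2).mul (lf_Jp p μ k)).ofReal
  have a4 : Tendsto (fun q : ℝ × ℝ × ℝ => Complex.exp (((q.1 * (⌊μ / q.1⌋ : ℝ) * q.2.2 : ℝ) : ℂ)
      * Complex.I)) (lf p) (𝓝 (Complex.exp (((μ * p.2 : ℝ) : ℂ) * Complex.I))) :=
    (Complex.continuous_exp.tendsto _).comp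
      ((((lf_fl p μ).mul (lf_z p)).ofReal).mul_const Complex.I)
  refine (a3.mul a4).congr' ?_
  filter_upwards [lf_pos p, lf_cos_pos p] with q hq hc
  rw [← Jp_eq _ _ _ hc.ne', G, heatTerm]
  have e : ((⌊μ / q.1⌋ : ℤ) : ℂ) * ((q.1 * q.2.2 : ℝ) : ℂ) * Complex.I =
    ((q.1 * (⌊μ / q.1⌋ : ℝ) * q.2.2 : ℝ) : ℂ) * Complex.I := by push_cast; ring
  rw [e]
  push_cast
  ring

end limits

lemma integral_exp_abs (a : ℝ) (ha : 0 < a) : ∫ x : ℝ, Real.exp (-(a * |x|)) = 2 / a := by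
  rw [integral_comp_abs (f := fun x => Real.exp (-(a * x)))]
  have := integral_exp_mul_Ioi (a := -a) (by linarith) 0
  simp only [neg_mul] at this
  rw [this]; simp; ring

lemma integrable_exp_abs (a : ℝ) (ha : 0 < a) :
    Integrable (fun x : ℝ => Real.exp (-(a * |x|))) := by
  by_contra h
  have h1 := integral_undef h
  rw [integral_exp_abs a ha] at h1
  exact (by positivity : 2 / a ≠ 0) h1

lemma Bd_integrable (k : ℕ) : Integrable (Bd k) :=
  (integrable_exp_abs ((k : ℝ) + 1) (by positivity)).const_mul _

lemma Bd_integral (k : ℕ) : ∫ x, Bd k x = 2 * ((k : ℝ) + 1) ^ (-(3 / 2 : ℝ)) := by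
  unfold Bd
  have hk : (0 : ℝ) < k + 1 := by positivity
  rw [integral_const_mul, integral_exp_abs _ hk, show (-(3 / 2 : ℝ)) = -(1 / 2) + (-1) by norm_num,
    Real.rpow_add hk, Real.rpow_neg_one]
  ring

lemma Bd_summable : Summable fun k => ∫ x, Bd k x := by
  simp only [Bd_integral]
  refine Summable.mul_left _ ?_
  have := (summable_nat_add_iff 1).2 (Real.summable_nat_rpow.2 (by norm_num : (-(3 / 2 : ℝ)) < -1))
  simpa using this

lemma integral_floor (φ : ℤ → ℂ) (h : Summable fun n => ‖φ n‖) :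
    ∫ x : ℝ, φ ⌊x⌋ = ∑' n, φ n := by
  have hm : Measurable fun x : ℝ => φ ⌊x⌋ := (measurable_of_countable φ).comp Int.measurable_floor
  have hset : ∀ n : ℤ, ∀ x ∈ Set.Ico (n : ℝ) (n + 1), ⌊x⌋ = n := fun n x hx =>
    Int.floor_eq_iff.2 ⟨hx.1, hx.2⟩
  have hI : ∀ n : ℤ, ∫ x in Set.Ico (n : ℝ) (n + 1), φ ⌊x⌋ = φ n := by
    intro n
    rw [setIntegral_congr_fun measurableSet_Ico (g := fun _ => φ n)
      (fun x hx => by simp only [hset n x hx])]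
    simp
  have hI' : ∀ n : ℤ, ∫ x in Set.Ico (n : ℝ) (n + 1), ‖φ ⌊x⌋‖ = ‖φ n‖ := by
    intro n
    rw [setIntegral_congr_fun measurableSet_Ico (g := fun _ => ‖φ n‖)
      (fun x hx => by simp only [hset n x hx])]
    simp
  have hint : IntegrableOn (fun x : ℝ => φ ⌊x⌋) (⋃ n : ℤ, Set.Ico (n : ℝ) (n + 1)) := by
    refine integrableOn_iUnion_of_summable_integral_norm (fun n => ?_) ?_
    · refine (integrableOn_const (C := φ n) (by simp)).congr_fun (fun x hx => ?_) measurableSet_Ico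
      simp only [hset n x hx]
    · simpa only [hI'] using h
  have := hasSum_integral_iUnion (fun n : ℤ => measurableSet_Ico) (Set.pairwise_disjoint_Ico_intCast ℝ)
    hint
  simp only [hI] at this
  rw [iUnion_Ico_intCast, setIntegral_univ] at this
  exact this.tsum_eq.symm

lemma heat_summable (t r z : ℝ) (ht : 0 < t) (hc : Real.cos (√t * r) ≠ 0) :
    Summable fun x : ℤ × ℕ => ‖heatTerm t (√t * r) z x.1 x.2‖ := by
  have hk : Summable fun k : ℕ => (2 * (k : ℝ) + 1) * Real.exp (-(4 * t) * k) := by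
    have h1 := (Real.summable_pow_mul_exp_neg_nat_mul 1 (r := 4 * t) (by positivity)).mul_left 2
    have h0 := Real.summable_pow_mul_exp_neg_nat_mul 0 (r := 4 * t) (by positivity)
    exact (h1.add h0).congr fun k => by simp; ring
  have hn' : Summable fun k : ℕ => ((k : ℝ) + 1) * Real.exp (-(2 * t) * k) := by
    have h1 := Real.summable_pow_mul_exp_neg_nat_mul 1 (r := 2 * t) (by positivity)
    have h0 := Real.summable_pow_mul_exp_neg_nat_mul 0 (r := 2 * t) (by positivity)
    exact (h1.add h0).congr fun k => by simp; ring
  have hn : Summable fun n : ℤ => ((n.natAbs : ℝ) + 1) * Real.exp (-(2 * t) * n.natAbs) := by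
    refine Summable.of_nat_of_neg ?_ ?_
    · simpa using hn'
    · simpa using hn'
  have hp := (hn.mul_of_nonneg hk (fun _ => by simp only [Pi.zero_apply]; positivity)
    (fun _ => by simp only [Pi.zero_apply]; positivity)).mul_left
    (Real.exp (|r| ^ 2 / 2))
  refine Summable.of_nonneg_of_le (fun _ => norm_nonneg _) (fun x => ?_) hp
  refine (heatTerm_bound t r z |r| x.1 x.2 ht le_rfl hc).trans ?_
  obtain ⟨n, k⟩ := x
  simp only
  gcongr Real.exp (|r| ^ 2 / 2) * ?_
  set m : ℝ := (n.natAbs : ℝ)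
  have hm0 : 0 ≤ m := by positivity
  calc _ ≤ ((m + 1) * (2 * k + 1)) * Real.exp (-(2 * t) * m + -(4 * t) * k) := by
        gcongr
        · nlinarith [mul_nonneg hm0 (Nat.cast_nonneg (α := ℝ) k)]
        · have : 0 ≤ (k : ℝ) ^ 2 * t := by positivity
          have : 0 ≤ k * m * t := by positivity
          nlinarith
    _ = _ := by rw [Real.exp_add]; ring

lemma heat_swap (t r z : ℝ) (ht : 0 < t) (hc : Real.cos (√t * r) ≠ 0) :
    (t : ℂ) ^ 2 * ∑' n : ℤ, ∑' k : ℕ, heatTerm t (√t * r) (t * z) n k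
      = ∑' k : ℕ, ∫ μ : ℝ, G k (t, r, z) μ := by
  have hs := heat_summable t r (t * z) ht hc
  have hs' : Summable (Function.uncurry fun n k => heatTerm t (√t * r) (t * z) n k) := hs.of_norm
  rw [← hs'.tsum_comm, ← tsum_mul_left]
  refine tsum_congr fun k => ?_
  unfold G
  simp only
  rw [integral_const_mul, Measure.integral_comp_div
    (fun x => heatTerm t (√t * r) (t * z) ⌊x⌋ k) t,
    integral_floor (fun n => heatTerm t (√t * r) (t * z) n k)
      (hs.comp_injective (i := fun n : ℤ => (n, k)) fun a b h => by simpa using h),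
    abs_of_pos ht, Complex.real_smul]
  ring

lemma choose_hasSum (j : ℕ) (w : ℝ) (hw : 0 ≤ w) (hw1 : w < 1) :
    HasSum (fun k : ℕ => (k.choose j : ℝ) * w ^ k) (w ^ j / (1 - w) ^ (j + 1)) := by
  have h := (hasSum_choose_mul_geometric_of_norm_lt_one j (r := w)
    (by rw [Real.norm_eq_abs, abs_of_nonneg hw]; exact hw1)).mul_left (w ^ j)
  rw [← hasSum_nat_add_iff' j]
  have h0 : ∑ i ∈ Finset.range j, (i.choose j : ℝ) * w ^ i = 0 :=
    Finset.sum_eq_zero fun i hi => by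
      rw [Nat.choose_eq_zero_of_lt (Finset.mem_range.1 hi)]; simp
  rw [h0, sub_zero]
  have e : w ^ j * (1 / (1 - w) ^ (j + 1)) = w ^ j / (1 - w) ^ (j + 1) := by ring
  rw [e] at h
  have e' : (fun n : ℕ => ((n + j).choose j : ℝ) * w ^ (n + j))
      = fun n => w ^ j * (((n + j).choose j : ℝ) * w ^ n) := by
    funext n; rw [pow_add]; ring
  rw [e']; exact h

lemma exp_hasSum (x : ℝ) : HasSum (fun j : ℕ => x ^ j / (j.factorial : ℝ)) (Real.exp x) := by
  rw [Real.exp_eq_exp_ℝ]; exact NormedSpace.expSeries_div_hasSum_exp x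

lemma lag_gen (x w : ℝ) (hw : 0 ≤ w) (hw1 : w < 1) :
    HasSum (fun k : ℕ => Lag k x * w ^ k) (1 / (1 - w) * Real.exp (-x * w / (1 - w))) := by
  have h1w : 0 < 1 - w := by linarith
  let F : ℕ × ℕ → ℝ := fun a => (-x) ^ a.1 / (a.1.factorial : ℝ) * ((a.2.choose a.1 : ℝ) * w ^ a.2)
  have hj : ∀ (y : ℝ) (j : ℕ), HasSum
      (fun k => y ^ j / (j.factorial : ℝ) * ((k.choose j : ℝ) * w ^ k))
      (1 / (1 - w) * ((y * w / (1 - w)) ^ j / (j.factorial : ℝ))) := by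
    intro y j
    have := (choose_hasSum j w hw hw1).mul_left (y ^ j / (j.factorial : ℝ))
    have e : 1 / (1 - w) * ((y * w / (1 - w)) ^ j / (j.factorial : ℝ))
        = y ^ j / (j.factorial : ℝ) * (w ^ j / (1 - w) ^ (j + 1)) := by
      rw [div_pow, mul_pow, pow_succ (1 - w) j]
      field_simp
    rw [e]; exact this
  have hF : Summable F := by
    refine Summable.of_norm ?_
    have hn : ∀ a : ℕ × ℕ, ‖F a‖ = |x| ^ a.1 / (a.1.factorial : ℝ)
        * ((a.2.choose a.1 : ℝ) * w ^ a.2) := by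
      intro a
      simp only [F, norm_mul, norm_div, norm_pow, Real.norm_eq_abs, abs_neg, Nat.abs_cast,
        abs_of_nonneg hw]
    rw [summable_prod_of_nonneg (fun _ => norm_nonneg _)]
    simp only [hn]
    refine ⟨fun j => (hj |x| j).summable, ?_⟩
    simp only [(hj |x| _).tsum_eq]
    exact ((exp_hasSum _).summable).mul_left _
  have e1 : HasSum (fun j => 1 / (1 - w) * ((-x * w / (1 - w)) ^ j / (j.factorial : ℝ)))
      (∑' a, F a) := hF.hasSum.prod_fiberwise fun j => hj (-x) j
  have e2 := (exp_hasSum (-x * w / (1 - w))).mul_left (1 / (1 - w))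
  rw [← e1.unique e2]
  have h3 : HasSum (fun a : ℕ × ℕ => F a.swap) (∑' a, F a) :=
    (Equiv.prodComm ℕ ℕ).hasSum_iff.2 hF.hasSum
  refine h3.prod_fiberwise fun k => ?_
  have h4 : HasSum (fun j => F (j, k)) (∑ j ∈ Finset.range (k + 1), F (j, k)) :=
    hasSum_sum_of_ne_finset_zero (fun j hj => by
      have : k < j := by simpa [Nat.lt_succ_iff] using hj
      simp [F, Nat.choose_eq_zero_of_lt this])
  have e : Lag k x * w ^ k = ∑ j ∈ Finset.range (k + 1), F (j, k) := by
    rw [Lag, Finset.sum_mul]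
    refine Finset.sum_congr rfl fun j _ => ?_
    simp only [F]; ring
  rw [e]; exact h4

/-- the integrand in Gaveau's formula at time one -/
noncomputable def H (p : ℝ × ℝ) (l : ℝ) : ℂ :=
  Complex.exp (Complex.I * (l : ℂ) * (p.2 : ℂ) / 2) *
        ((l : ℂ) / Complex.sinh ((l : ℂ) * ((1 : ℝ) : ℂ))) *
        Complex.exp (-(((p.1 : ℂ) ^ 2 / 4) * (l : ℂ) *
          (Complex.cosh ((l : ℂ) * ((1 : ℝ) : ℂ)) / Complex.sinh ((l : ℂ) * ((1 : ℝ) : ℂ)))))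

lemma H_real (p : ℝ × ℝ) (l : ℝ) :
    H p l = ((l / Real.sinh l * Real.exp (-(p.1 ^ 2 / 4 * (l * (Real.cosh l / Real.sinh l)))) : ℝ) : ℂ)
      * Complex.exp (((l / 2 * p.2 : ℝ) : ℂ) * Complex.I) := by
  unfold H
  push_cast
  rw [mul_one]
  rw [show Complex.I * (l : ℂ) * (p.2 : ℂ) / 2 = (l : ℂ) / 2 * p.2 * Complex.I by ring]
  rw [← mul_assoc ((p.1 : ℂ) ^ 2 / 4)]
  ring

lemma real_ident (a s : ℝ) (ha : 0 < a) :
    a * Real.exp (-(2 * a)) * Real.exp (-(a * (s / 2))) *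
      (1 / (1 - Real.exp (-(4 * a))) * Real.exp (-(a * s) * Real.exp (-(4 * a)) / (1 - Real.exp (-(4 * a)))))
    = 1 / 4 * (2 * a / Real.sinh (2 * a) *
        Real.exp (-(s / 4 * (2 * a * (Real.cosh (2 * a) / Real.sinh (2 * a)))))) := by
  set v := Real.exp (-(2 * a)) with hv
  have hv0 : 0 < v := Real.exp_pos _
  have hv1 : v < 1 := Real.exp_lt_one_iff.2 (by linarith)
  have hw : Real.exp (-(4 * a)) = v ^ 2 := by
    rw [hv, ← Real.exp_nat_mul]; congr 1; push_cast; ring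
  have hu : Real.exp (2 * a) = v⁻¹ := by rw [hv, Real.exp_neg, inv_inv]
  have h1 : 0 < 1 - v ^ 2 := by nlinarith
  rw [hw, Real.sinh_eq, Real.cosh_eq, hu, ← hv]
  have e1 : Real.exp (-(a * (s / 2))) * Real.exp (-(a * s) * v ^ 2 / (1 - v ^ 2))
      = Real.exp (-(s / 4 * (2 * a * ((v⁻¹ + v) / 2 / ((v⁻¹ - v) / 2))))) := by
    rw [← Real.exp_add]
    congr 1
    have : v⁻¹ - v = (1 - v ^ 2) / v := by field_simp
    rw [this]
    field_simp
    ring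
  rw [← e1]
  have : v⁻¹ - v = (1 - v ^ 2) / v := by field_simp
  rw [this]
  field_simp
  ring

lemma Phi_hasSum (p : ℝ × ℝ) (μ : ℝ) (hμ : μ ≠ 0) :
    HasSum (fun k => Phi p k μ) ((1 / 4 : ℂ) * H p (2 * μ)) := by
  have ha : 0 < |μ| := abs_pos.2 hμ
  have hw1 : Real.exp (-(4 * |μ|)) < 1 := Real.exp_lt_one_iff.2 (by linarith)
  have h := (lag_gen (|μ| * p.1 ^ 2) _ (Real.exp_pos (-(4 * |μ|))).le hw1).mul_left
    (|μ| * Real.exp (-(2 * |μ|)) * Real.exp (-(|μ| * (p.1 ^ 2 / 2))))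
  rw [real_ident _ _ ha] at h
  have h2 := (Complex.hasSum_ofReal.2 h).mul_right (Complex.exp (((μ * p.2 : ℝ) : ℂ) * Complex.I))
  have e1 : (1 / 4 : ℂ) * H p (2 * μ) = ((1 / 4 * (2 * |μ| / Real.sinh (2 * |μ|) *
      Real.exp (-(p.1 ^ 2 / 4 * (2 * |μ| * (Real.cosh (2 * |μ|) / Real.sinh (2 * |μ|)))))) : ℝ) : ℂ)
      * Complex.exp (((μ * p.2 : ℝ) : ℂ) * Complex.I) := by
    rw [H_real]
    have b1 : 2 * |μ| / Real.sinh (2 * |μ|) = 2 * μ / Real.sinh (2 * μ) := by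
      rcases abs_choice μ with h | h <;> rw [h]
      rw [mul_neg, Real.sinh_neg, neg_div_neg_eq]
    have b2 : 2 * |μ| * (Real.cosh (2 * |μ|) / Real.sinh (2 * |μ|))
        = 2 * μ * (Real.cosh (2 * μ) / Real.sinh (2 * μ)) := by
      rcases abs_choice μ with h | h <;> rw [h]
      rw [mul_neg, Real.sinh_neg, Real.cosh_neg, div_neg]; ring
    rw [b1, b2, show 2 * μ / 2 * p.2 = μ * p.2 by ring]
    push_cast
    ring
  rw [e1]
  have e2 : (fun k => Phi p k μ) = fun k : ℕ => ((|μ| * Real.exp (-(2 * |μ|)) *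
      Real.exp (-(|μ| * (p.1 ^ 2 / 2))) * (Lag k (|μ| * p.1 ^ 2) * Real.exp (-(4 * |μ|)) ^ k) : ℝ) : ℂ)
      * Complex.exp (((μ * p.2 : ℝ) : ℂ) * Complex.I) := by
    funext k
    unfold Phi
    congr 2
    have : Real.exp (-((4 * k + 2) * |μ|)) = Real.exp (-(2 * |μ|)) * Real.exp (-(4 * |μ|)) ^ k := by
      rw [← Real.exp_nat_mul, ← Real.exp_add]; congr 1; ring
    rw [this]; ring
  rw [e2]; exact h2

instance (p : ℝ × ℝ) : (lf p).NeBot := by unfold lf; infer_instance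

/-- the constant in the dominating bound -/
noncomputable def Cp (p : ℝ × ℝ) : ℝ := Real.exp ((|p.1| + 1) ^ 2 / 2) * (3 * Real.exp 4)

lemma lf_bound (p : ℝ × ℝ) :
    ∀ᶠ q in lf p, ∀ (k : ℕ) (μ : ℝ), ‖G k q μ‖ ≤ Cp p * Bd k μ := by
  filter_upwards [lf_pos p, lf_cos_pos p, (lf_t p).eventually (gt_mem_nhds one_pos),
    (lf_r p).abs.eventually (gt_mem_nhds (lt_add_one _))] with q h1 h2 h3 h4 k μ
  exact G_bound k q.1 q.2.1 q.2.2 _ μ h1 h3.le h4.le h2.ne'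

lemma Phi_bound (p : ℝ × ℝ) (k : ℕ) (μ : ℝ) : ‖Phi p k μ‖ ≤ Cp p * Bd k μ :=
  le_of_tendsto (lf_G p μ k).norm ((lf_bound p).mono fun _ h => h k μ)

lemma Phi_cont (p : ℝ × ℝ) (k : ℕ) : Continuous (Phi p k) := by
  unfold Phi Lag
  fun_prop

lemma Phi_integrable (p : ℝ × ℝ) (k : ℕ) : Integrable (Phi p k) :=
  ((Bd_integrable k).const_mul (Cp p)).mono' (Phi_cont p k).aestronglyMeasurable
    (Eventually.of_forall fun μ => Phi_bound p k μ)

lemma G_meas (k : ℕ) (q : ℝ × ℝ × ℝ) : Measurable (G k q) := by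
  unfold G
  refine Measurable.const_mul ?_ _
  exact (measurable_of_countable (fun n : ℤ => heatTerm q.1 (√q.1 * q.2.1) (q.1 * q.2.2) n k)).comp
    (Int.measurable_floor.comp (measurable_id.div_const _))

lemma limit_C (p : ℝ × ℝ) :
    Tendsto (fun q => ∑' k : ℕ, ∫ μ : ℝ, G k q μ) (lf p) (𝓝 (∑' k : ℕ, ∫ μ : ℝ, Phi p k μ)) := by
  have hi : ∀ k, Integrable fun μ => Cp p * Bd k μ := fun k => (Bd_integrable k).const_mul _
  refine tendsto_tsum_of_dominated_convergence (bound := fun k => ∫ μ, Cp p * Bd k μ) ?_ ?_ ?_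
  · simp only [integral_const_mul]
    exact Bd_summable.mul_left _
  · intro k
    refine tendsto_integral_filter_of_dominated_convergence (fun μ => Cp p * Bd k μ) ?_ ?_ (hi k) ?_
    · exact Eventually.of_forall fun q => (G_meas k q).aestronglyMeasurable
    · exact (lf_bound p).mono fun q h => Eventually.of_forall fun μ => h k μ
    · exact Eventually.of_forall fun μ => lf_G p μ k
  · exact (lf_bound p).mono fun q h k =>
      norm_integral_le_of_norm_le (hi k) (Eventually.of_forall fun μ => h k μ)

lemma sum_Phi (p : ℝ × ℝ) :
    ∑' k : ℕ, ∫ μ : ℝ, Phi p k μ = (1 / 8 : ℂ) * ∫ l : ℝ, H p l := by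
  have h := hasSum_integral_of_summable_integral_norm (F := Phi p) (μ := volume)
    (Phi_integrable p) (by
      refine Summable.of_nonneg_of_le (fun k => integral_nonneg fun _ => norm_nonneg _)
        (fun k => ?_) (Bd_summable.mul_left (Cp p))
      rw [← integral_const_mul]
      exact integral_mono (Phi_integrable p k).norm ((Bd_integrable k).const_mul _)
        fun μ => Phi_bound p k μ)
  rw [h.tsum_eq]
  have h2 : ∫ μ : ℝ, ∑' k, Phi p k μ = ∫ μ : ℝ, (1 / 4 : ℂ) * H p (2 * μ) := by
    refine integral_congr_ae ?_
    have : ∀ᵐ μ : ℝ, μ ≠ 0 := by simp [ae_iff]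
    filter_upwards [this] with μ hμ
    exact (Phi_hasSum p μ hμ).tsum_eq
  rw [h2, integral_const_mul, Measure.integral_comp_mul_left (H p) 2, Complex.real_smul]
  rw [abs_of_pos (by norm_num)]
  push_cast
  ring

lemma heisKer_eq (p : ℝ × ℝ) :
    2 * Real.pi ^ 2 * heisKer 1 p.1 p.2 = ((1 / 8 : ℂ) * ∫ l : ℝ, H p l).re := by
  have : ((1 / 8 : ℂ) * ∫ l : ℝ, H p l).re = 1 / 8 * (∫ l : ℝ, H p l).re := by
    rw [show (1 / 8 : ℂ) = ((1 / 8 : ℝ) : ℂ) by push_cast; rfl, Complex.re_ofReal_mul]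
  rw [this]
  have hk : heisKer 1 p.1 p.2 = (1 / (16 * Real.pi ^ 2)) * (∫ l : ℝ, H p l).re := rfl
  rw [hk]
  have := Real.pi_pos
  field_simp
  ring

lemma limit_R (p : ℝ × ℝ) :
    Tendsto (fun q : ℝ × ℝ × ℝ => q.1 ^ 2 * heatP q.1 (√q.1 * q.2.1) (q.1 * q.2.2)) (lf p)
      (𝓝 (2 * Real.pi ^ 2 * heisKer 1 p.1 p.2)) := by
  rw [heisKer_eq, ← sum_Phi]
  refine ((Complex.continuous_re.tendsto _).comp (limit_C p)).congr' ?_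
  filter_upwards [lf_pos p, lf_cos_pos p] with q h1 h2
  have := heat_swap q.1 q.2.1 q.2.2 h1 h2.ne'
  rw [Function.comp, ← this, heatP, ← Complex.re_ofReal_mul]
  push_cast; rfl

end SU2Heat

/-- Rescaled convergence to the Heisenberg-group heat kernel: for every compact
`K ⊂ [0,∞) × ℝ`, `(r,z) ↦ t² p_t(√t r, t z)` converges uniformly on `K`, as `t → 0⁺`,
to `(r,z) ↦ 2π² h_1(r,z)`. -/
theorem stmt_15 (K : Set (ℝ × ℝ)) (hK : IsCompact K)
    (hK' : K ⊆ Set.Ici 0 ×ˢ (Set.univ : Set ℝ)) :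
    TendstoUniformlyOn
      (fun (t : ℝ) (p : ℝ × ℝ) => t ^ 2 * heatP t (Real.sqrt t * p.1) (t * p.2))
      (fun p : ℝ × ℝ => 2 * Real.pi ^ 2 * heisKer 1 p.1 p.2)
      (nhdsWithin 0 (Set.Ioi 0)) K := by
  rw [← tendstoLocallyUniformlyOn_iff_tendstoUniformlyOn_of_compact hK,
    Metric.tendstoLocallyUniformlyOn_iff]
  intro ε hε p _
  have h := (Metric.tendsto_nhds.1 (SU2Heat.limit_R p)) (ε / 3) (by positivity)
  rw [SU2Heat.lf, eventually_prod_iff] at h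
  obtain ⟨pa, ha, pb, hb, hab⟩ := h
  refine ⟨{x | pb x}, mem_nhdsWithin_of_mem_nhds hb, ?_⟩
  filter_upwards [ha] with t ht x hx
  have h1 := hab ht hx
  have h2 : dist (2 * Real.pi ^ 2 * heisKer 1 x.1 x.2) (2 * Real.pi ^ 2 * heisKer 1 p.1 p.2)
      ≤ ε / 3 := by
    have hl : Tendsto (fun t : ℝ => (t, x)) (𝓝[>] 0) (SU2Heat.lf x) :=
      tendsto_id.prodMk (tendsto_const_nhds)
    have hl2 := ((SU2Heat.limit_R x).comp hl).dist
      (tendsto_const_nhds (x := 2 * Real.pi ^ 2 * heisKer 1 p.1 p.2))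
    refine le_of_tendsto hl2 ?_
    filter_upwards [ha] with s hs
    exact (hab hs hx).le
  simp only at h1 ⊢
  calc _ ≤ dist (2 * Real.pi ^ 2 * heisKer 1 x.1 x.2) (2 * Real.pi ^ 2 * heisKer 1 p.1 p.2) +
        dist (2 * Real.pi ^ 2 * heisKer 1 p.1 p.2) _ := dist_triangle _ _ _
    _ < ε := by
      rw [dist_comm] at h1
      linarith
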